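/- arXiv:2001.11707 — 2 statements merged into one kernel-verified Lean document; each statement's English description precedes it below -/
import Mathlib

section
/- For every n ≥ 0 and all simplicial complexes 𝒦₁, 𝒦₂ over S, the n-skeletons satisfy d(πₙ(𝒦₁), πₙ(𝒦₂)) ≤ d(𝒦₁, 𝒦₂); that is, the n-skeleton map πₙ is 1-Lipschitz for the distance d. -/
open scoped BigOperators

/-- A simplicial complex over the vertex set `S`: a nonempty collection of
nonempty finite subsets of `S`, closed under taking nonempty subsets. -/
def IsSimplicialComplex {S : Type*} (K : Set (Finset S)) : Prop :=
  K.Nonempty ∧ (∀ F ∈ K, F.Nonempty) ∧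
    ∀ F ∈ K, ∀ G : Finset S, G.Nonempty → G ⊆ F → G ∈ K

/-- Halved ℓ¹ distance between finitely supported real functions:
`d(α,β) = (1/2) ∑ₛ |α s - β s|`. -/
noncomputable def l1dist {S : Type*} (α β : S →₀ ℝ) : ℝ :=
  (1 / 2) * (α - β).sum fun _ x => |x|

/-- The ℓ¹ geometric realization of a collection `K` of finite subsets of `S`:
finitely supported probability vectors whose support is a face of `K`. -/
def realization {S : Type*} (K : Set (Finset S)) : Set (S →₀ ℝ) :=
  {α | (∀ s, 0 ≤ α s) ∧ (α.sum fun _ x => x) = 1 ∧ α.support ∈ K}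

/-- Distance from a point to a set of finitely supported functions. -/
noncomputable def distToSet {S : Type*} (α : S →₀ ℝ) (X : Set (S →₀ ℝ)) : ℝ :=
  sInf (l1dist α '' X)

/-- One-sided Hausdorff distance between (the realizations of) two complexes. -/
noncomputable def hdelta {S : Type*} (K₁ K₂ : Set (Finset S)) : ℝ :=
  sSup ((fun α => distToSet α (realization K₂)) '' realization K₁)

/-- Hausdorff distance between (the realizations of) two simplicial complexes. -/
noncomputable def hdist {S : Type*} (K₁ K₂ : Set (Finset S)) : ℝ :=
  max (hdelta K₁ K₂) (hdelta K₂ K₁)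

/-- `d(F, K)`: supremum of distances to `|K|₁` over probability vectors
supported exactly on `F`. -/
noncomputable def dFace {S : Type*} (F : Finset S) (K : Set (Finset S)) : ℝ :=
  sSup ((fun α => distToSet α (realization K)) ''
    {α : S →₀ ℝ | (∀ s, 0 ≤ α s) ∧ (α.sum fun _ x => x) = 1 ∧ α.support = F})

/-- The `n`-skeleton of a simplicial complex. -/
def skeleton {S : Type*} (n : ℕ) (K : Set (Finset S)) : Set (Finset S) :=
  {F | F ∈ K ∧ F.card ≤ n + 1}

lemma l1dist_eq_sum {S : Type*} (α β : S →₀ ℝ) (T : Finset S)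
    (ha : α.support ⊆ T) (hb : β.support ⊆ T) :
    l1dist α β = (1 / 2) * ∑ s ∈ T, |α s - β s| := by
  classical
  unfold l1dist
  rw [Finsupp.sum_of_support_subset (s := T)]
  · simp
  · exact Finsupp.support_sub.trans (Finset.union_subset ha hb)
  · simp

lemma l1dist_nonneg' {S : Type*} (α β : S →₀ ℝ) : 0 ≤ l1dist α β := by
  unfold l1dist Finsupp.sum
  positivity

lemma l1dist_le_one {S : Type*} {K L : Set (Finset S)} {α β : S →₀ ℝ}
    (ha : α ∈ realization K) (hb : β ∈ realization L) : l1dist α β ≤ 1 := by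
  classical
  obtain ⟨a0, a1, -⟩ := ha
  obtain ⟨b0, b1, -⟩ := hb
  rw [l1dist_eq_sum α β (α.support ∪ β.support) Finset.subset_union_left
    Finset.subset_union_right]
  rw [Finsupp.sum_of_support_subset (s := α.support ∪ β.support) _
    Finset.subset_union_left _ (by simp)] at a1
  rw [Finsupp.sum_of_support_subset (s := α.support ∪ β.support) _
    Finset.subset_union_right _ (by simp)] at b1
  have : ∑ s ∈ α.support ∪ β.support, |α s - β s| ≤
      ∑ s ∈ α.support ∪ β.support, (α s + β s) := by
    apply Finset.sum_le_sum
    intro s _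
    rw [abs_le]
    constructor <;> linarith [a0 s, b0 s]
  rw [Finset.sum_add_distrib] at this
  linarith

lemma exists_skeleton_close {S : Type*} (n : ℕ) {K₁ K₂ : Set (Finset S)}
    (h2 : IsSimplicialComplex K₂) {α β : S →₀ ℝ}
    (ha : α ∈ realization (skeleton n K₁)) (hb : β ∈ realization K₂) :
    ∃ γ ∈ realization (skeleton n K₂), l1dist α γ ≤ l1dist α β := by
  classical
  obtain ⟨a0, a1, -, aF⟩ := ha
  obtain ⟨b0, b1, bK⟩ := hb
  obtain ⟨v, hv, hvF⟩ : ∃ v ∈ β.support, v ∈ α.support ∨ Disjoint α.support β.support := by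
    by_cases h : Disjoint α.support β.support
    · obtain ⟨v, hv⟩ := h2.2.1 _ bK
      exact ⟨v, hv, Or.inr h⟩
    · obtain ⟨v, h1, h3⟩ := Finset.not_disjoint_iff.1 h
      exact ⟨v, h3, Or.inl h1⟩
  set F := α.support with hF
  set T := F ∪ β.support with hT
  have hFT : F ⊆ T := Finset.subset_union_left
  have hbT : β.support ⊆ T := Finset.subset_union_right
  have hvT : v ∈ T := hbT hv
  set m : ℝ := ∑ s ∈ T, (if s ∈ F then 0 else β s) with hm
  have hm0 : 0 ≤ m := Finset.sum_nonneg fun s _ => by split_ifs; exacts [le_rfl, b0 s]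
  set γ : S →₀ ℝ := β.filter (· ∈ F) + Finsupp.single v m with hγ
  have γe : ∀ s, γ s = (if s ∈ F then β s else 0) + (if s = v then m else 0) := by
    intro s
    simp [hγ, Finsupp.filter_apply, Finsupp.single_apply, eq_comm]
  have γ0 : ∀ s, 0 ≤ γ s := by
    intro s
    rw [γe]
    have := b0 s
    split_ifs <;> linarith
  have γsub : γ.support ⊆ β.support := by
    intro s hs
    by_contra h
    have hsv : s ≠ v := fun e => h (e ▸ hv)
    rw [Finsupp.mem_support_iff, γe] at hs
    simp [hsv, Finsupp.notMem_support_iff.1 h] at hs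
  have γsum : (γ.sum fun _ x => x) = 1 := by
    rw [Finsupp.sum_of_support_subset (s := T) _ (γsub.trans hbT) _ (by simp)]
    rw [Finsupp.sum_of_support_subset (s := T) _ hbT _ (by simp)] at b1
    simp only [γe, Finset.sum_add_distrib]
    rw [Finset.sum_ite_eq' T v, if_pos hvT, hm, ← Finset.sum_add_distrib, ← b1]
    apply Finset.sum_congr rfl
    intro s _
    split_ifs <;> simp
  have γne : γ.support.Nonempty := by
    rw [Finset.nonempty_iff_ne_empty]
    intro h
    rw [Finsupp.support_eq_empty] at h
    simp [h] at γsum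
  have γcard : γ.support.card ≤ n + 1 := by
    rcases hvF with hvF | hd
    · refine (Finset.card_le_card ?_).trans aF
      intro s hs
      by_contra h
      have hsv : s ≠ v := fun e => h (e ▸ hvF)
      rw [Finsupp.mem_support_iff, γe] at hs
      simp [hsv, h] at hs
    · have : γ.support ⊆ {v} := by
        intro s hs
        by_contra h
        rw [Finset.mem_singleton] at h
        have hsF : s ∉ F := fun e => Finset.disjoint_left.1 hd e (γsub hs)
        rw [Finsupp.mem_support_iff, γe] at hs
        simp [hsF, h] at hs
      have := Finset.card_le_card this
      simp at this
      omega
  refine ⟨γ, ⟨γ0, γsum, h2.2.2 _ bK _ γne γsub, γcard⟩, ?_⟩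
  rw [l1dist_eq_sum α γ T hFT (γsub.trans hbT), l1dist_eq_sum α β T hFT hbT]
  have key : ∑ s ∈ T, |α s - γ s| ≤
      ∑ s ∈ T, ((if s ∈ F then |α s - β s| else 0) + (if s = v then m else 0)) := by
    apply Finset.sum_le_sum
    intro s _
    rw [γe]
    have hα : s ∉ F → α s = 0 := fun h => Finsupp.notMem_support_iff.1 h
    by_cases h : s ∈ F
    · simp only [h, if_true]
      split_ifs
      · calc |α s - (β s + m)| = |(α s - β s) - m| := by ring_nf
          _ ≤ |α s - β s| + |m| := abs_sub _ _
          _ = _ := by rw [abs_of_nonneg hm0]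
      · simp
    · simp only [h, if_false, hα h]
      split_ifs <;> simp [abs_of_nonneg hm0]
  rw [Finset.sum_add_distrib, Finset.sum_ite_eq' T v, if_pos hvT, hm,
    ← Finset.sum_add_distrib] at key
  have : ∑ s ∈ T, ((if s ∈ F then |α s - β s| else 0) + (if s ∈ F then 0 else β s))
      = ∑ s ∈ T, |α s - β s| := by
    apply Finset.sum_congr rfl
    intro s _
    by_cases h : s ∈ F
    · simp [h]
    · simp [h, Finsupp.notMem_support_iff.1 h, abs_of_nonneg (b0 s)]
  linarith

lemma realization_nonempty {S : Type*} {K : Set (Finset S)} (h : IsSimplicialComplex K) :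
    (realization K).Nonempty := by
  obtain ⟨⟨F, hF⟩, hne, hsub⟩ := h
  obtain ⟨v, hv⟩ := hne F hF
  classical
  refine ⟨Finsupp.single v 1, fun s => ?_, by simp, ?_⟩
  · rw [Finsupp.single_apply]; split_ifs <;> norm_num
  · rw [Finsupp.support_single_ne_zero _ one_ne_zero]
    exact hsub F hF _ (Finset.singleton_nonempty v) (by simpa using hv)

lemma l1_image_bddBelow {S : Type*} (α : S →₀ ℝ) (X : Set (S →₀ ℝ)) :
    BddBelow (l1dist α '' X) :=
  ⟨0, by rintro _ ⟨β, -, rfl⟩; exact l1dist_nonneg' α β⟩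

lemma hdelta_skeleton_le {S : Type*} (n : ℕ) (K₁ K₂ : Set (Finset S))
    (h2 : IsSimplicialComplex K₂) :
    hdelta (skeleton n K₁) (skeleton n K₂) ≤ hdelta K₁ K₂ := by
  have hne := realization_nonempty h2
  unfold hdelta
  apply Real.sSup_le
  · rintro _ ⟨α, ha, rfl⟩
    have step : distToSet α (realization (skeleton n K₂)) ≤ distToSet α (realization K₂) := by
      apply le_csInf (hne.image _)
      rintro _ ⟨β, hb, rfl⟩
      obtain ⟨γ, hg, hle⟩ := exists_skeleton_close n h2 ha hb
      exact (csInf_le (l1_image_bddBelow _ _) ⟨γ, hg, rfl⟩).trans hle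
    refine step.trans (le_csSup ?_ ⟨α, ⟨ha.1, ha.2.1, ha.2.2.1⟩, rfl⟩)
    refine ⟨1, ?_⟩
    rintro _ ⟨α', ha', rfl⟩
    obtain ⟨β, hb⟩ := hne
    exact (csInf_le (l1_image_bddBelow _ _) ⟨β, hb, rfl⟩).trans (l1dist_le_one ha' hb)
  · apply Real.sSup_nonneg
    rintro _ ⟨α, -, rfl⟩
    apply Real.sInf_nonneg
    rintro _ ⟨β, -, rfl⟩
    exact l1dist_nonneg' α β

/-- The `n`-skeleton map is 1-Lipschitz for the Hausdorff distance. -/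
theorem stmt4 {S : Type*} (n : ℕ) (K₁ K₂ : Set (Finset S))
    (h1 : IsSimplicialComplex K₁) (h2 : IsSimplicialComplex K₂) :
    hdist (skeleton n K₁) (skeleton n K₂) ≤ hdist K₁ K₂ :=
  max_le_max (hdelta_skeleton_le n K₁ K₂ h2) (hdelta_skeleton_le n K₂ K₁ h1)
end

section
/- Let 𝒦 be a simplicial complex over S having faces of arbitrarily large cardinality (i.e., 𝒦 is infinite-dimensional). Then 𝒦 is an accumulation point for the distance d: for every n ≥ 1 there exists a simplicial complex 𝒦ₙ over S with 𝒦ₙ ≠ 𝒦 and 0 < d(𝒦, 𝒦ₙ) ≤ 1/n. -/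
open scoped BigOperators

lemma l1dist_self' {S : Type*} (α : S →₀ ℝ) : l1dist α α = 0 := by
  simp [l1dist]

lemma l1dist_ge' {S : Type*} (α β : S →₀ ℝ) (s : S) : (1 / 2) * |α s - β s| ≤ l1dist α β := by
  unfold l1dist Finsupp.sum
  have : |α s - β s| ≤ ∑ a ∈ (α - β).support, |(α - β) a| := by
    by_cases h : s ∈ (α - β).support
    · have := Finset.single_le_sum (f := fun a => |(α - β) a|) (fun _ _ => abs_nonneg _) h
      simpa using this
    · have h0 : (α - β) s = 0 := by simpa using h
      have h1 : α s - β s = 0 := by simpa using h0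
      rw [h1, abs_zero]
      exact Finset.sum_nonneg (fun _ _ => abs_nonneg _)
  linarith

lemma distToSet_le' {S : Type*} (α β : S →₀ ℝ) (X : Set (S →₀ ℝ)) (h : β ∈ X) :
    distToSet α X ≤ l1dist α β := by
  apply csInf_le
  · refine ⟨0, ?_⟩
    rintro _ ⟨γ, _, rfl⟩
    exact l1dist_nonneg' _ _
  · exact ⟨β, h, rfl⟩

lemma move_mass {S : Type*} (α : S →₀ ℝ) (hα : ∀ x, 0 ≤ α x)
    (hsum : (α.sum fun _ x => x) = 1) (s t : S) (hst : s ≠ t) (ht : t ∈ α.support) :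
    ∃ β : S →₀ ℝ, (∀ x, 0 ≤ β x) ∧ (β.sum fun _ x => x) = 1 ∧ β.support ⊆ α.support ∧
      s ∉ β.support ∧ l1dist α β ≤ α s := by
  classical
  have hdec : Finsupp.single s (α s) + α.erase s = α := Finsupp.single_add_erase s α
  refine ⟨α.erase s + Finsupp.single t (α s), ?_, ?_, ?_, ?_, ?_⟩
  · intro x
    have h1 : 0 ≤ α.erase s x := by
      rw [Finsupp.erase_apply]; split_ifs
      · exact le_rfl
      · exact hα x
    have h2 : 0 ≤ Finsupp.single t (α s) x := by
      rw [Finsupp.single_apply]; split_ifs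
      · exact hα s
      · exact le_rfl
    simpa using add_nonneg h1 h2
  · have h1 : (α.sum fun _ x => x) = α s + ((α.erase s).sum fun _ x => x) := by
      conv_lhs => rw [← hdec]
      rw [Finsupp.sum_add_index' (by simp) (by simp), Finsupp.sum_single_index rfl]
    rw [Finsupp.sum_add_index' (by simp) (by simp), Finsupp.sum_single_index rfl]
    linarith
  · intro x hx
    by_contra hxa
    have hxa' : α x = 0 := by simpa using hxa
    have hxt : t ≠ x := fun h => hxa (h ▸ ht)
    simp [Finsupp.erase_apply, Finsupp.single_apply, hxa', hxt] at hx
  · simp [Finsupp.single_apply, hst.symm]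
  · have hd : α - (α.erase s + Finsupp.single t (α s))
        = Finsupp.single s (α s) - Finsupp.single t (α s) := by
      conv_lhs => enter [1]; rw [← hdec]
      abel
    have hsub : (Finsupp.single s (α s) - Finsupp.single t (α s)).support ⊆ ({s, t} : Finset S) := by
      intro x hx
      by_contra hc
      simp only [Finset.mem_insert, Finset.mem_singleton, not_or] at hc
      simp [Finsupp.single_apply, Ne.symm hc.1, Ne.symm hc.2] at hx
    unfold l1dist
    rw [hd, Finsupp.sum_of_support_subset _ hsub _ (by simp), Finset.sum_pair hst]
    simp only [Finsupp.sub_apply, Finsupp.single_apply, if_true, hst, hst.symm, if_false]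
    simp only [sub_zero, zero_sub, abs_neg, abs_of_nonneg (hα s)]
    linarith

theorem stmt16 {S : Type*} (K : Set (Finset S)) (hK : IsSimplicialComplex K)
    (hinf : ∀ n : ℕ, ∃ F ∈ K, n ≤ F.card) :
    ∀ n : ℕ, 1 ≤ n → ∃ K' : Set (Finset S), IsSimplicialComplex K' ∧ K' ≠ K ∧
      0 < hdist K K' ∧ hdist K K' ≤ 1 / (n : ℝ) := by
  classical
  intro n hn
  obtain ⟨F, hF, hFn⟩ := hinf (n + 1)
  obtain ⟨-, hne, hdown⟩ := hK
  have hn0 : (0 : ℝ) < n := by exact_mod_cast hn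
  have hcard : (n : ℝ) ≤ F.card := by exact_mod_cast (by omega : n ≤ F.card)
  have hcpos : (0 : ℝ) < F.card := lt_of_lt_of_le hn0 hcard
  set K' : Set (Finset S) := {G | G ∈ K ∧ ¬ F ⊆ G} with hK'
  obtain ⟨a, ha⟩ := hne F hF
  have hsing : ({a} : Finset S) ∈ K' := by
    refine ⟨hdown F hF _ (by simp) (by simpa using ha), fun h => ?_⟩
    have := Finset.card_le_card h
    simp at this
    omega
  have hpt : Finsupp.single a (1 : ℝ) ∈ realization K' := by
    refine ⟨fun x => ?_, by simp, ?_⟩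
    · rw [Finsupp.single_apply]; split_ifs <;> norm_num
    · rw [Finsupp.support_single_ne_zero _ one_ne_zero]; exact hsing
  have hinv : 0 ≤ 1 / (n : ℝ) := by positivity
  -- upper bounds
  have hA : ∀ α ∈ realization K, distToSet α (realization K') ≤ 1 / (n : ℝ) := by
    rintro α ⟨h0, h1, hs⟩
    by_cases hFs : F ⊆ α.support
    · have hmin : ∃ s ∈ F, α s ≤ 1 / (n : ℝ) := by
        by_contra! hc
        have h2 : ∑ s ∈ F, (1 / (n : ℝ)) < ∑ s ∈ F, α s := Finset.sum_lt_sum_of_nonempty ⟨a, ha⟩ hc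
        have h3 : ∑ s ∈ F, α s ≤ ∑ s ∈ α.support, α s :=
          Finset.sum_le_sum_of_subset_of_nonneg hFs (fun i _ _ => h0 i)
        have h4 : ∑ s ∈ α.support, α s = 1 := h1
        rw [Finset.sum_const, nsmul_eq_mul, mul_one_div] at h2
        have h5 : 1 ≤ (F.card : ℝ) / n := by rw [le_div_iff₀ hn0]; linarith
        linarith
      obtain ⟨s, hsF, hsn⟩ := hmin
      obtain ⟨t, htF, hts⟩ := Finset.exists_mem_ne (by omega : 1 < F.card) s
      obtain ⟨β, b0, b1, bs, bns, bd⟩ := move_mass α h0 h1 s t hts.symm (hFs htF)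
      have hbne : β.support.Nonempty := by
        rw [Finset.nonempty_iff_ne_empty]
        intro h
        rw [Finsupp.support_eq_empty] at h
        rw [h] at b1
        simp at b1
      have hβ : β ∈ realization K' :=
        ⟨b0, b1, hdown _ hs _ hbne bs, fun h => bns (h hsF)⟩
      exact (distToSet_le' α β _ hβ).trans (bd.trans hsn)
    · refine (distToSet_le' α α (realization K') ⟨h0, h1, hs, hFs⟩).trans ?_
      rw [l1dist_self']; exact hinv
  have hB : ∀ α ∈ realization K', distToSet α (realization K) ≤ 1 / (n : ℝ) := by
    rintro α ⟨h0, h1, hs⟩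
    refine (distToSet_le' α α (realization K) ⟨h0, h1, hs.1⟩).trans ?_
    rw [l1dist_self']; exact hinv
  -- lower bound
  have hpos : 0 < hdist K K' := by
    set c : ℝ := 1 / (F.card : ℝ) with hc
    have hc0 : 0 < c := by positivity
    set u : S →₀ ℝ := Finsupp.indicator F (fun _ _ => c) with hu
    have hus : ∀ x ∈ F, u x = c := fun x hx => by simp [hu, Finsupp.indicator_apply, hx]
    have husn : ∀ x, x ∉ F → u x = 0 := fun x hx => by simp [hu, Finsupp.indicator_apply, hx]
    have hsupp : u.support = F := by
      ext x
      rw [Finsupp.mem_support_iff]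
      by_cases hx : x ∈ F
      · simp [hus x hx, hx, hc0.ne']
      · simp [husn x hx, hx]
    have huK : u ∈ realization K := by
      refine ⟨fun x => ?_, ?_, by rw [hsupp]; exact hF⟩
      · by_cases hx : x ∈ F
        · rw [hus x hx]; exact hc0.le
        · rw [husn x hx]
      · unfold Finsupp.sum
        rw [hsupp, Finset.sum_congr rfl hus, Finset.sum_const, nsmul_eq_mul, hc]
        field_simp
    have hlow : c / 2 ≤ distToSet u (realization K') := by
      apply le_csInf (Set.Nonempty.image _ ⟨_, hpt⟩)
      rintro _ ⟨β, ⟨_, _, _, hβ⟩, rfl⟩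
      obtain ⟨s, hsF, hsβ⟩ := Finset.not_subset.mp hβ
      have hβs : β s = 0 := by simpa using hsβ
      have := l1dist_ge' u β s
      rw [hβs, hus s hsF, sub_zero, abs_of_pos hc0] at this
      linarith
    have hle : distToSet u (realization K') ≤ hdelta K K' := by
      apply le_csSup
      · refine ⟨1 / (n : ℝ), ?_⟩
        rintro _ ⟨α, hα, rfl⟩
        exact hA α hα
      · exact ⟨u, huK, rfl⟩
    have : hdelta K K' ≤ hdist K K' := le_max_left _ _
    linarith
  refine ⟨K', ⟨⟨_, hsing⟩, fun G hG => hne G hG.1, ?_⟩, ?_, hpos, ?_⟩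
  · intro G hG H hH hHG
    exact ⟨hdown G hG.1 H hH hHG, fun h => hG.2 (h.trans hHG)⟩
  · intro h
    have : F ∈ K' := by rw [h]; exact hF
    exact this.2 (Finset.Subset.refl _)
  · apply max_le
    · apply Real.sSup_le _ hinv
      rintro _ ⟨α, hα, rfl⟩
      exact hA α hα
    · apply Real.sSup_le _ hinv
      rintro _ ⟨α, hα, rfl⟩
      exact hB α hα
end
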